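/- Let n = 2 and let P := F_q[X_1,X_2,Y_1,Y_2,Z] be a polynomial ring in 5 variables, with φ: P → F_q[x_1,x_2,y_1,y_2] the F_q-algebra homomorphism X_1 ↦ f_1, X_2 ↦ f_2, Y_1 ↦ f_1*, Y_2 ↦ f_2*, Z ↦ u_0. Then: (a) the invariant ring F_q[x_1,x_2,y_1,y_2]^{U_2} equals the image of φ, and (b) the kernel of φ is the principal ideal generated by Z^q − (X_1 Y_1)^{q−1} Z − X_1^q Y_2 − Y_1^q X_2. -/

import Mathlib

open MvPolynomial Matrix

variable (F : Type) [Field F] [Fintype F]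

/-- The action of `σ ∈ GL_2(F)` on `F[V ⊕ V*] = F[x_1,x_2,y_1,y_2]`:
`σ` acts naturally on the span of the `x_j` (so `σ·x_j = ∑_i σ_{ij} x_i`)
and by `σ·λ = λ ∘ σ⁻¹` on the span of the `y_j` (so `σ·y_j = ∑_i (σ⁻¹)_{ji} y_i`). -/
noncomputable def gact2 (σ : GL (Fin 2) F) :
    MvPolynomial (Fin 2 ⊕ Fin 2) F →ₐ[F] MvPolynomial (Fin 2 ⊕ Fin 2) F :=
  aeval (Sum.elim
    (fun j => ∑ i : Fin 2, C ((σ : Matrix (Fin 2) (Fin 2) F) i j) * X (Sum.inl i))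
    (fun j => ∑ i : Fin 2,
      C (((σ⁻¹ : GL (Fin 2) F) : Matrix (Fin 2) (Fin 2) F) j i) * X (Sum.inr i)))

/-- The presentation map `φ : F_q[X_1,X_2,Y_1,Y_2,Z] → F_q[x_1,x_2,y_1,y_2]` with
`X_1 ↦ f_1 = x_1`, `X_2 ↦ f_2 = x_2^q - x_2 x_1^{q-1}`, `Y_1 ↦ f_1^* = y_2`,
`Y_2 ↦ f_2^* = y_1^q - y_1 y_2^{q-1}`, `Z ↦ u_0 = x_1 y_1 + x_2 y_2`.
The five variables of `Fin 5` are, in order, `X_1, X_2, Y_1, Y_2, Z`. -/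
noncomputable def phi2 : MvPolynomial (Fin 5) F →ₐ[F] MvPolynomial (Fin 2 ⊕ Fin 2) F :=
  aeval
    ![X (Sum.inl 0),
      X (Sum.inl 1) ^ (Fintype.card F) - X (Sum.inl 1) * X (Sum.inl 0) ^ (Fintype.card F - 1),
      X (Sum.inr 1),
      X (Sum.inr 0) ^ (Fintype.card F) - X (Sum.inr 0) * X (Sum.inr 1) ^ (Fintype.card F - 1),
      X (Sum.inl 0) * X (Sum.inr 0) + X (Sum.inl 1) * X (Sum.inr 1)]

/-!
For `q = card F`, the expression `N_a(b) = b ^ q - b a ^ (q - 1)` is additive in `b`, vanishes on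
the `F`-multiples of `a` and is homogeneous of degree `q` in `(a, b)`. Since `f_2 = N_{x_1}(x_2)`
and `f_2^* = N_{y_2}(y_1)`, expanding `N_{x_1 y_2}(u_0)` gives the relation.

The relation is monic of degree `q` in `Z`, so everything reduces to polynomials `h` of degree less
than `q` in `Z`. Modulo `x_1`, the images of `X_2` and `Z` become `x_2 ^ q` and `x_2 y_2`; comparing
exponents of `x_2` modulo `q` shows that if `x_1` divides the image of `h`, then `X_1` divides `h`.
Hence an `h` in the kernel is infinitely divisible by `X_1`, so it is `0`; and if `x_1 p` lies in
the image of `φ`, then so does `p`.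

After multiplication by a power of `x_1`, an invariant is a polynomial of degree less than `q` in
`x_2` with coefficients in the image of `φ`. It takes the same value at the `q` translates
`x_2 + c x_1`, so it is constant, that is, in the image.
-/

open scoped Polynomial

section MonicPresentation

variable {A B : Type*} [CommRing A] [CommRing B] [IsDomain B] {f : A →+* B} {u : B}
  {r : A[X]} {a : A}

theorem mem_range_of_mul_mem_range (hr : r.Monic) (hroot : r.eval₂ f u = 0) (hfa : f a ≠ 0)
    (hdvd : ∀ h : A[X], h.degree < r.degree → f a ∣ h.eval₂ f u → Polynomial.C a ∣ h)
    {p : B} (hp : f a * p ∈ (Polynomial.eval₂RingHom f u).range) :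
    p ∈ (Polynomial.eval₂RingHom f u).range := by
  have := f.domain_nontrivial
  obtain ⟨h, hh⟩ := hp
  have hmod : (h %ₘ r).eval₂ f u = f a * p :=
    (Polynomial.eval₂_modByMonic_eq_self_of_root hroot).trans hh
  obtain ⟨k, hk⟩ := hdvd _ (Polynomial.degree_modByMonic_lt h hr) (hmod ▸ dvd_mul_right _ _)
  rw [hk, Polynomial.eval₂_mul, Polynomial.eval₂_C] at hmod
  exact ⟨k, mul_left_cancel₀ hfa hmod⟩

variable [IsDomain A] [WfDvdMonoid A]

theorem eq_zero_of_eval₂_eq_zero_of_degree_lt (ha : ¬IsUnit a) (hfa : f a ≠ 0)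
    (hdvd : ∀ h : A[X], h.degree < r.degree → f a ∣ h.eval₂ f u → Polynomial.C a ∣ h)
    {h : A[X]} (hdeg : h.degree < r.degree) (h0 : h.eval₂ f u = 0) : h = 0 := by
  by_contra hne
  have ha0 : a ≠ 0 := fun ha0 => hfa (by rw [ha0, map_zero])
  obtain ⟨k, hk, hndvd⟩ := (FiniteMultiplicity.of_not_isUnit
    (Polynomial.isUnit_C.not.mpr ha) hne).exists_eq_pow_mul_and_not_dvd
  set n := multiplicity (Polynomial.C a) h
  rw [hk, ← Polynomial.C_pow] at hdeg h0
  rw [Polynomial.degree_C_mul (pow_ne_zero n ha0)] at hdeg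
  rw [Polynomial.eval₂_mul, Polynomial.eval₂_C, map_pow] at h0
  have hk0 : k.eval₂ f u = 0 := (mul_eq_zero.mp h0).resolve_left (pow_ne_zero n hfa)
  exact hndvd (hdvd k hdeg (hk0 ▸ dvd_zero _))

theorem ker_eval₂RingHom_eq_span (hr : r.Monic) (hroot : r.eval₂ f u = 0)
    (ha : ¬IsUnit a) (hfa : f a ≠ 0)
    (hdvd : ∀ h : A[X], h.degree < r.degree → f a ∣ h.eval₂ f u → Polynomial.C a ∣ h) :
    RingHom.ker (Polynomial.eval₂RingHom f u) = Ideal.span {r} := by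
  ext h
  rw [Ideal.mem_span_singleton, ← Polynomial.modByMonic_eq_zero_iff_dvd hr, RingHom.mem_ker,
    Polynomial.coe_eval₂RingHom, ← Polynomial.eval₂_modByMonic_eq_self_of_root hroot]
  refine ⟨eq_zero_of_eval₂_eq_zero_of_degree_lt ha hfa hdvd (Polynomial.degree_modByMonic_lt h hr),
    fun h0 => ?_⟩
  rw [h0, Polynomial.eval₂_zero]

end MonicPresentation

section Polynomial

theorem compRingHom_injective {R : Type*} [CommRing R] [NoZeroDivisors R] {g : R[X]}
    (hg : g.natDegree ≠ 0) : Function.Injective (Polynomial.compRingHom g) := by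
  rw [injective_iff_map_eq_zero]
  intro p hp
  rw [Polynomial.coe_compRingHom_apply, Polynomial.comp_eq_zero_iff] at hp
  refine hp.resolve_right fun ⟨_, hgC⟩ => hg ?_
  rw [hgC, Polynomial.natDegree_C]

theorem coeff_expand_mul_X_mul_C_pow {R : Type*} [CommSemiring R] {n i j : ℕ} (hi : i < n)
    (hj : j < n) (p : R[X]) (t : R) (k : ℕ) :
    (Polynomial.expand R n p * (Polynomial.X * Polynomial.C t) ^ j).coeff (k * n + i) =
      if j = i then p.coeff k * t ^ i else 0 := by
  have hn : 0 < n := Nat.zero_lt_of_lt hi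
  rw [mul_pow, ← mul_assoc, ← Polynomial.C_pow, Polynomial.coeff_mul_C,
    Polynomial.coeff_mul_X_pow']
  split_ifs with hle hji hji
  · rw [hji, Nat.add_sub_cancel, Polynomial.coeff_expand_mul hn]
  · have hndvd : ¬n ∣ k * n + i - j := fun hdvd => by
      have hmod : j ≡ k * n + i [MOD n] := (Nat.modEq_iff_dvd' hle).mpr hdvd
      have hmod' : j ≡ i [MOD n] := hmod.trans (by simp [Nat.ModEq])
      exact hji (hmod'.eq_of_lt_of_lt hj hi)
    rw [Polynomial.coeff_expand hn, if_neg hndvd, zero_mul]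
  · exact absurd (hji.trans_le (Nat.le_add_left i _)) hle
  · rw [zero_mul]

theorem eq_zero_of_eval₂_expand_eq_zero {R : Type*} [CommSemiring R] [NoZeroDivisors R] {n : ℕ}
    {t : R} (ht : t ≠ 0) {h : R[X][X]} (hdeg : h.degree < n)
    (h0 : h.eval₂ (Polynomial.expand R n : R[X] →+* R[X])
      (Polynomial.X * Polynomial.C t) = 0) : h = 0 := by
  by_contra hne
  have hnat : h.natDegree < n := (Polynomial.natDegree_lt_iff_degree_lt hne).mpr hdeg
  apply hne
  ext i k
  rcases le_or_gt n i with hi | hi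
  · rw [Polynomial.coeff_eq_zero_of_natDegree_lt (hnat.trans_le hi), Polynomial.coeff_zero,
      Polynomial.coeff_zero, Polynomial.coeff_zero]
  have hcoeff : ∑ j ∈ Finset.range n, (Polynomial.expand R n (h.coeff j) *
      (Polynomial.X * Polynomial.C t) ^ j).coeff (k * n + i) = 0 := by
    rw [Polynomial.eval₂_eq_sum_range' _ hnat] at h0
    simpa using congrArg (fun p => Polynomial.coeff p (k * n + i)) h0
  rw [Finset.sum_congr rfl fun j hj => coeff_expand_mul_X_mul_C_pow hi (Finset.mem_range.mp hj) ..,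
    Finset.sum_ite_eq' _ i, if_pos (Finset.mem_range.mpr hi)] at hcoeff
  exact (mul_eq_zero.mp hcoeff).resolve_right (pow_ne_zero i ht)

variable {R : Type*} [CommRing R]

theorem ker_le_of_sub_X_mem {ι T : Type*} [Semiring T] [Algebra R T]
    {ρ : MvPolynomial ι R →ₐ[R] T} {β : T →ₐ[R] MvPolynomial ι R} {I : Ideal (MvPolynomial ι R)}
    (h : ∀ i, β (ρ (X i)) - X i ∈ I) : RingHom.ker ρ ≤ I := by
  have hmk : (Ideal.Quotient.mkₐ R I).comp (β.comp ρ) = Ideal.Quotient.mkₐ R I :=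
    MvPolynomial.algHom_ext fun i => Ideal.Quotient.eq.mpr (h i)
  intro p hp
  have hmkp := DFunLike.congr_fun hmk p
  simp only [AlgHom.comp_apply, (RingHom.mem_ker).mp hp, map_zero] at hmkp
  exact Ideal.Quotient.eq_zero_iff_mem.mp hmkp.symm

/-- The isomorphism `R[X_0, …, X_n] ≃ R[X_0, …, X_{n-1}][X]` singling out the last variable. -/
noncomputable def lastVarEquiv (R : Type*) [CommRing R] (n : ℕ) :
    MvPolynomial (Fin (n + 1)) R ≃ₐ[R] (MvPolynomial (Fin n) R)[X] :=
  (renameEquiv R finSuccEquivLast).trans (optionEquivLeft R (Fin n))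

@[simp]
theorem lastVarEquiv_X_castSucc {n : ℕ} (i : Fin n) :
    lastVarEquiv R n (X i.castSucc) = Polynomial.C (X i) := by
  simp [lastVarEquiv]

@[simp]
theorem lastVarEquiv_X_last (n : ℕ) : lastVarEquiv R n (X (Fin.last n)) = Polynomial.X := by
  simp [lastVarEquiv]

theorem eval₂_lastVarEquiv {n : ℕ} {S : Type*} [CommRing S] [Algebra R S]
    (φ : MvPolynomial (Fin (n + 1)) R →ₐ[R] S) (p : MvPolynomial (Fin (n + 1)) R) :
    (lastVarEquiv R n p).eval₂ (φ.comp (rename Fin.castSucc) : MvPolynomial (Fin n) R →+* S)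
      (φ (X (Fin.last n))) = φ p := by
  have hcomp : (Polynomial.eval₂RingHom
      (φ.comp (rename Fin.castSucc) : MvPolynomial (Fin n) R →+* S) (φ (X (Fin.last n)))).comp
        (lastVarEquiv R n : MvPolynomial (Fin (n + 1)) R →+* (MvPolynomial (Fin n) R)[X]) = φ := by
    refine MvPolynomial.ringHom_ext (fun c => ?_) fun i => ?_
    · simp [lastVarEquiv, ← MvPolynomial.algebraMap_eq]
    · induction i using Fin.lastCases <;> simp
  exact DFunLike.congr_fun hcomp p

end Polynomial

section OrbitNorm

variable {R : Type*} [CommRing R]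

/-- For `q = card F` and an `F`-algebra `R`, this is the norm `∏ c : F, (b + c • a)` of `b` under
the translations by the multiples of `a`, written out. Both `f_2` and `f_2^*` are of this form. -/
def orbitNorm (q : ℕ) (a b : R) : R :=
  b ^ q - b * a ^ (q - 1)

theorem map_orbitNorm {R' G : Type*} [CommRing R'] [FunLike G R R'] [RingHomClass G R R'] (g : G)
    (q : ℕ) (a b : R) : g (orbitNorm q a b) = orbitNorm q (g a) (g b) := by
  simp [orbitNorm]

theorem orbitNorm_zero_left {q : ℕ} (hq : 1 < q) (b : R) : orbitNorm q 0 b = b ^ q := by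
  rw [orbitNorm, zero_pow (Nat.sub_ne_zero_of_lt hq), mul_zero, sub_zero]

theorem orbitNorm_mul_mul {q : ℕ} (hq : q ≠ 0) (t a b : R) :
    orbitNorm q (t * a) (t * b) = t ^ q * orbitNorm q a b := by
  rw [orbitNorm, orbitNorm, mul_pow, mul_pow, ← pow_sub_one_mul hq t]
  ring

section FiniteField

variable (K : Type*) [Field K] [Fintype K] [Algebra K R]

local notation "q" => Fintype.card K

theorem orbitNorm_add (a b b' : R) :
    orbitNorm q a (b + b') = orbitNorm q a b + orbitNorm q a b' := by
  have hfrob : (b + b') ^ q = b ^ q + b' ^ q := map_add (FiniteField.frobeniusAlgHom K R) b b'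
  rw [orbitNorm, orbitNorm, orbitNorm, hfrob]
  ring

variable {K} in
theorem orbitNorm_smul_self (c : K) (a : R) : orbitNorm q a (c • a) = 0 := by
  rw [orbitNorm, smul_pow, FiniteField.pow_card, smul_mul_assoc,
    mul_pow_sub_one Fintype.card_ne_zero, sub_self]

variable {K} in
theorem orbitNorm_add_smul_self (a b : R) (c : K) :
    orbitNorm q a (b + c • a) = orbitNorm q a b := by
  rw [orbitNorm_add, orbitNorm_smul_self, add_zero]

theorem orbitNorm_mul_add_mul (x₁ x₂ y₁ y₂ : R) :
    orbitNorm q (x₁ * y₂) (x₁ * y₁ + x₂ * y₂) =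
      x₁ ^ q * orbitNorm q y₂ y₁ + y₂ ^ q * orbitNorm q x₁ x₂ := by
  have hq : q ≠ 0 := Fintype.card_ne_zero
  rw [orbitNorm_add, orbitNorm_mul_mul hq, mul_comm x₁ y₂, mul_comm x₂ y₂, orbitNorm_mul_mul hq]

end FiniteField

theorem orbitNorm_C_X_sub_C_eq (q : ℕ) (a b : R) :
    orbitNorm q (Polynomial.C a) Polynomial.X - Polynomial.C b =
      Polynomial.X ^ q - (Polynomial.C (a ^ (q - 1)) * Polynomial.X + Polynomial.C b) := by
  rw [orbitNorm, Polynomial.C_pow]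
  ring

theorem degree_linear_lt {q : ℕ} (hq : 1 < q) (a b : R) :
    (Polynomial.C a * Polynomial.X + Polynomial.C b).degree < (q : WithBot ℕ) :=
  Polynomial.degree_linear_le.trans_lt (by exact_mod_cast hq)

theorem monic_orbitNorm_C_X_sub_C {q : ℕ} (hq : 1 < q) (a b : R) :
    (orbitNorm q (Polynomial.C a) Polynomial.X - Polynomial.C b).Monic := by
  rw [orbitNorm_C_X_sub_C_eq]
  exact Polynomial.monic_X_pow_sub (degree_linear_lt hq _ _)

theorem degree_orbitNorm_C_X_sub_C [Nontrivial R] {q : ℕ} (hq : 1 < q) (a b : R) :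
    (orbitNorm q (Polynomial.C a) Polynomial.X - Polynomial.C b).degree = q := by
  rw [orbitNorm_C_X_sub_C_eq, Polynomial.degree_sub_eq_left_of_degree_lt, Polynomial.degree_X_pow]
  rw [Polynomial.degree_X_pow]
  exact degree_linear_lt hq _ _

theorem natDegree_orbitNorm_C_X [Nontrivial R] {q : ℕ} (hq : 1 < q) (a : R) :
    (orbitNorm q (Polynomial.C a) Polynomial.X).natDegree = q := by
  have hdeg := degree_orbitNorm_C_X_sub_C hq a 0
  rw [Polynomial.C_0, sub_zero] at hdeg
  exact Polynomial.natDegree_eq_of_degree_eq_some hdeg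

end OrbitNorm

section Invariants

theorem exists_degree_lt_aeval_eq_of_mem_adjoin {A S : Type*} [CommRing A] [Nontrivial A]
    [CommRing S] [Algebra A S] {x p : S} {r : A[X]} (hr : r.Monic)
    (hroot : Polynomial.aeval x r = 0) (hp : p ∈ Algebra.adjoin A {x}) :
    ∃ g : A[X], g.degree < r.degree ∧ Polynomial.aeval x g = p := by
  rw [Algebra.adjoin_singleton_eq_range_aeval] at hp
  obtain ⟨g, rfl⟩ := hp
  exact ⟨g %ₘ r, Polynomial.degree_modByMonic_lt g hr,
    Polynomial.aeval_modByMonic_eq_self_of_root hroot⟩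

/-- Modulo the monic equation of `x` over `A`, write `p = g(x)` with `deg g < q`; applying the `q`
translations shows that `g` takes the value `p` at `q` distinct points, so `g` is constant. -/
theorem mem_range_of_fixed_of_mem_adjoin {K A S : Type*} [Field K] [Fintype K]
    [CommRing A] [CommRing S] [IsDomain S] [Algebra K S] [Algebra A S] {t n : A} {x p : S}
    (ht : algebraMap A S t ≠ 0)
    (hn : orbitNorm (Fintype.card K) (algebraMap A S t) x = algebraMap A S n)
    (σ : K → S →ₐ[A] S) (hx : ∀ c, σ c x = x + c • algebraMap A S t) (hfix : ∀ c, σ c p = p)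
    (hp : p ∈ Algebra.adjoin A {x}) : p ∈ (algebraMap A S).range := by
  have := (algebraMap A S).domain_nontrivial
  have hq : 1 < Fintype.card K := Fintype.one_lt_card
  obtain ⟨g, hdeg, hg⟩ := exists_degree_lt_aeval_eq_of_mem_adjoin
    (monic_orbitNorm_C_X_sub_C hq t n) (by simp [map_orbitNorm, hn]) hp
  rw [degree_orbitNorm_C_X_sub_C hq] at hdeg
  have hconst : g.map (algebraMap A S) = Polynomial.C p := by
    refine Polynomial.eq_of_degrees_lt_of_eval_index_eq Finset.univ
      (v := fun c : K => x + c • algebraMap A S t) ?_ (Polynomial.degree_map_le.trans_lt hdeg)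
      (Polynomial.degree_C_le.trans_lt (by exact_mod_cast Fintype.card_pos)) fun c _ => ?_
    · exact ((add_right_injective x).comp (smul_left_injective K ht)).injOn
    · rw [Polynomial.eval_C, Polynomial.eval_map_algebraMap, ← hx, Polynomial.aeval_algHom_apply,
        hg, hfix]
  refine ⟨g.coeff 0, ?_⟩
  rw [← Polynomial.coeff_map, hconst, Polynomial.coeff_C_zero]

end Invariants

section Action

theorem eq_upperRightHom_of_unipotent {R : Type*} [CommRing R] {σ : GL (Fin 2) R}
    (hdiag : ∀ i, (σ : Matrix (Fin 2) (Fin 2) R) i i = 1)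
    (hlower : ∀ i j, j < i → (σ : Matrix (Fin 2) (Fin 2) R) i j = 0) :
    σ = GeneralLinearGroup.upperRightHom ((σ : Matrix (Fin 2) (Fin 2) R) 0 1) := by
  ext i j
  fin_cases i <;> fin_cases j <;> simp [hdiag, hlower 1 0]

theorem forall_unipotent_iff {R : Type*} [CommRing R] {Q : GL (Fin 2) R → Prop} :
    (∀ σ : GL (Fin 2) R,
      ((∀ i, (σ : Matrix (Fin 2) (Fin 2) R) i i = 1) ∧
        ∀ i j, j < i → (σ : Matrix (Fin 2) (Fin 2) R) i j = 0) → Q σ) ↔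
      ∀ c : R, Q (GeneralLinearGroup.upperRightHom c) := by
  refine ⟨fun h c => h _ ⟨fun i => ?_, fun i j hij => ?_⟩, fun h σ hσ => ?_⟩
  · fin_cases i <;> simp
  · obtain ⟨rfl, rfl⟩ : i = 1 ∧ j = 0 := by omega
    simp
  · rw [eq_upperRightHom_of_unipotent hσ.1 hσ.2]
    exact h _

variable {K : Type} [Field K] (c : K)

theorem gact2_upperRightHom_x₁ :
    gact2 K (GeneralLinearGroup.upperRightHom c) (X (Sum.inl 0)) = X (Sum.inl 0) := by
  simp [gact2]

theorem gact2_upperRightHom_x₂ :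
    gact2 K (GeneralLinearGroup.upperRightHom c) (X (Sum.inl 1)) =
      X (Sum.inl 1) + c • X (Sum.inl 0) := by
  simp [gact2, add_comm, smul_eq_C_mul]

theorem gact2_upperRightHom_y₁ :
    gact2 K (GeneralLinearGroup.upperRightHom c) (X (Sum.inr 0)) =
      X (Sum.inr 0) + (-c) • X (Sum.inr 1) := by
  simp [gact2, smul_eq_C_mul]

theorem gact2_upperRightHom_y₂ :
    gact2 K (GeneralLinearGroup.upperRightHom c) (X (Sum.inr 1)) = X (Sum.inr 1) := by
  simp [gact2]

end Action

section Saturation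

variable {R S : Type*} [CommRing R] [CommRing S] [Algebra R S] {B : Subalgebra R S} {x : S}

theorem mem_of_pow_mul_mem (hsat : ∀ p, x * p ∈ B → p ∈ B) (k : ℕ) {p : S} (hp : x ^ k * p ∈ B) :
    p ∈ B := by
  induction k with
  | zero => simpa using hp
  | succ k ih => exact ih (hsat _ (by rwa [← mul_assoc, ← pow_succ']))

theorem saturation_eq_top_of_X_mem {ι : Type*} {B : Subalgebra R (MvPolynomial ι R)}
    {M : Submonoid (MvPolynomial ι R)} (hM : M ≤ B.toSubmonoid)
    (hX : ∀ i, ∃ m ∈ M, m * X i ∈ B) : B.saturation M hM = ⊤ := by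
  rw [← top_le_iff, ← MvPolynomial.adjoin_range_X, Algebra.adjoin_le_iff]
  exact Set.range_subset_iff.mpr hX

end Saturation

section Reduction

variable (R : Type*) [CommRing R]

/-- Reduction modulo `X_1` of `R[X_1, X_2, Y_1, Y_2]`. In the target the variables `Y_1`, `Y_2`,
`X_2` are adjoined in this order. -/
noncomputable def reduceSource : MvPolynomial (Fin 4) R →ₐ[R] R[X][X][X] :=
  aeval (S₁ := R[X][X][X])
    ![0, Polynomial.X, Polynomial.C (Polynomial.C Polynomial.X), Polynomial.C Polynomial.X]

/-- Reduction modulo `x_1` of `R[x_1, x_2, y_1, y_2]`. In the target the variables `y_2`, `y_1`,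
`x_2` are adjoined in this order. -/
noncomputable def reduceTarget : MvPolynomial (Fin 2 ⊕ Fin 2) R →ₐ[R] R[X][X][X] :=
  aeval (S₁ := R[X][X][X]) (Sum.elim ![0, Polynomial.X]
    ![Polynomial.C Polynomial.X, Polynomial.C (Polynomial.C Polynomial.X)])

variable {R}

theorem X_zero_dvd_of_reduceSource_eq_zero {c : MvPolynomial (Fin 4) R}
    (hc : reduceSource R c = 0) : X 0 ∣ c := by
  obtain ⟨lift, hX₁, hX₂, hX₃⟩ : ∃ lift : R[X][X][X] →ₐ[R] MvPolynomial (Fin 4) R,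
      lift Polynomial.X = X 1 ∧ lift (Polynomial.C (Polynomial.C Polynomial.X)) = X 2 ∧
        lift (Polynomial.C Polynomial.X) = X 3 :=
    ⟨Polynomial.aevalTower (Polynomial.aevalTower (Polynomial.aeval (X 2)) (X 3)) (X 1),
      by simp, by simp, by simp⟩
  have hlift (i : Fin 4) : lift (reduceSource R (X i)) - X i ∈ Ideal.span {X 0} := by
    rw [Ideal.mem_span_singleton, reduceSource, aeval_X]
    fin_cases i
    · simp
    · simp [hX₁]
    · simp [hX₂]
    · simp [hX₃]
  exact Ideal.mem_span_singleton.mp (ker_le_of_sub_X_mem hlift (RingHom.mem_ker.mpr hc))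

end Reduction

section Presentation

local notation "q" => Fintype.card F
local notation "S" => MvPolynomial (Fin 2 ⊕ Fin 2) F

theorem phi2_X_zero : phi2 F (X 0) = X (Sum.inl 0) := by
  simp [phi2]

theorem phi2_X_one : phi2 F (X 1) = orbitNorm q (X (Sum.inl 0)) (X (Sum.inl 1)) := by
  simp [phi2, orbitNorm]

theorem phi2_X_two : phi2 F (X 2) = X (Sum.inr 1) := by
  simp [phi2]

theorem phi2_X_three : phi2 F (X 3) = orbitNorm q (X (Sum.inr 1)) (X (Sum.inr 0)) := by
  simp [phi2, orbitNorm]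

theorem phi2_X_four :
    phi2 F (X 4) = X (Sum.inl 0) * X (Sum.inr 0) + X (Sum.inl 1) * X (Sum.inr 1) := by
  simp [phi2]

/-- The restriction of `phi2` to `F[X_1, X_2, Y_1, Y_2]`. -/
noncomputable def phi4 : MvPolynomial (Fin 4) F →ₐ[F] S :=
  (phi2 F).comp (rename Fin.castSucc)

/-- The generator `Z ^ q - (X_1 Y_1) ^ (q - 1) Z - X_1 ^ q Y_2 - Y_1 ^ q X_2` of the kernel
of `phi2`. -/
noncomputable def relation : MvPolynomial (Fin 5) F :=
  X 4 ^ q - (X 0 * X 2) ^ (q - 1) * X 4 - X 0 ^ q * X 3 - X 2 ^ q * X 1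

theorem relation_eq_orbitNorm_sub :
    relation F = orbitNorm q (X 0 * X 2) (X 4) - (X 0 ^ q * X 3 + X 2 ^ q * X 1) := by
  rw [relation, orbitNorm]
  ring

theorem phi2_relation : phi2 F (relation F) = 0 := by
  simp only [relation_eq_orbitNorm_sub, map_sub, map_add, map_mul, map_pow, map_orbitNorm,
    phi2_X_zero, phi2_X_one, phi2_X_two, phi2_X_three, phi2_X_four, orbitNorm_mul_add_mul, sub_self]

theorem lastVarEquiv_relation :
    lastVarEquiv F 4 (relation F) = orbitNorm q (Polynomial.C (X 0 * X 2))
      (Polynomial.X : (MvPolynomial (Fin 4) F)[X]) -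
        Polynomial.C (X 0 ^ q * X 3 + X 2 ^ q * X 1) := by
  have h (i : Fin 4) := lastVarEquiv_X_castSucc (R := F) i
  have h₀ := h 0
  have h₁ := h 1
  have h₂ := h 2
  have h₃ := h 3
  have h₄ := lastVarEquiv_X_last (R := F) 4
  simp only [Fin.reduceCastSucc, Fin.reduceLast] at h₀ h₁ h₂ h₃ h₄
  simp only [relation_eq_orbitNorm_sub, map_sub, map_add, map_mul, map_pow, map_orbitNorm,
    h₀, h₁, h₂, h₃, h₄]

theorem eval₂_phi4_lastVarEquiv (p : MvPolynomial (Fin 5) F) :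
    (lastVarEquiv F 4 p).eval₂ (phi4 F : MvPolynomial (Fin 4) F →+* S) (phi2 F (X 4)) = phi2 F p :=
  eval₂_lastVarEquiv (phi2 F) p

theorem phi4_X_zero : phi4 F (X 0) = X (Sum.inl 0) := by
  simp [phi4, phi2_X_zero]

/-- The substitution `Y_2 ↦ f_2^*`, `Y_1 ↦ y_2` on `F[Y_1][Y_2][X_2]`. Together with
`X_2 ↦ x_2 ^ q` it is the reduction of `phi4` modulo `x_1`. -/
noncomputable def substDualNorm : F[X][X][X] →+* F[X][X][X] :=
  Polynomial.mapRingHom (Polynomial.compRingHom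
    (orbitNorm q (Polynomial.C Polynomial.X) (Polynomial.X : F[X][X])))

theorem substDualNorm_injective : Function.Injective (substDualNorm F) :=
  Polynomial.map_injective _ (compRingHom_injective
    ((natDegree_orbitNorm_C_X Fintype.one_lt_card _).trans_ne Fintype.card_ne_zero))

theorem reduceTarget_phi4 (c : MvPolynomial (Fin 4) F) :
    reduceTarget F (phi4 F c) =
      Polynomial.expand F[X][X] q (substDualNorm F (reduceSource F c)) := by
  have hcomp : (reduceTarget F).toRingHom.comp (phi4 F).toRingHom =
      ((Polynomial.expand F[X][X] q).toRingHom.comp (substDualNorm F)).comp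
        (reduceSource F).toRingHom := by
    refine MvPolynomial.ringHom_ext (fun r => ?_) fun i => ?_
    · simp [substDualNorm, reduceSource, Polynomial.algebraMap_apply]
    · fin_cases i
      · simp [phi4, phi2_X_zero, reduceTarget, reduceSource]
      · simp [phi4, phi2_X_one, map_orbitNorm, reduceTarget, reduceSource, substDualNorm,
          orbitNorm_zero_left Fintype.one_lt_card]
      · simp [phi4, phi2_X_two, reduceTarget, reduceSource, substDualNorm]
      · simp [phi4, phi2_X_three, map_orbitNorm, reduceTarget, reduceSource, substDualNorm]
  exact DFunLike.congr_fun hcomp c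

theorem reduceTarget_phi2_X_four :
    reduceTarget F (phi2 F (X 4)) = Polynomial.X * Polynomial.C (Polynomial.C Polynomial.X) := by
  simp [phi2_X_four, reduceTarget]

theorem reduceTarget_eval₂_phi4 (h : (MvPolynomial (Fin 4) F)[X]) :
    reduceTarget F (h.eval₂ (phi4 F : MvPolynomial (Fin 4) F →+* S) (phi2 F (X 4))) =
      (h.map ((substDualNorm F).comp (reduceSource F).toRingHom)).eval₂
        (Polynomial.expand F[X][X] q : F[X][X][X] →+* F[X][X][X])
        (Polynomial.X * Polynomial.C (Polynomial.C Polynomial.X)) := by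
  rw [← reduceTarget_phi2_X_four, Polynomial.eval₂_map, ← AlgHom.coe_toRingHom,
    Polynomial.hom_eval₂]
  congr 1
  exact RingHom.ext fun c => reduceTarget_phi4 F c

theorem monic_lastVarEquiv_relation : (lastVarEquiv F 4 (relation F)).Monic := by
  rw [lastVarEquiv_relation]
  exact monic_orbitNorm_C_X_sub_C Fintype.one_lt_card _ _

theorem degree_lastVarEquiv_relation : (lastVarEquiv F 4 (relation F)).degree = q := by
  rw [lastVarEquiv_relation]
  exact degree_orbitNorm_C_X_sub_C Fintype.one_lt_card _ _

theorem C_X_zero_dvd_of_phi4_X_zero_dvd_eval₂ (h : (MvPolynomial (Fin 4) F)[X])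
    (hdeg : h.degree < (lastVarEquiv F 4 (relation F)).degree)
    (hdvd : (phi4 F : MvPolynomial (Fin 4) F →+* S) (X 0) ∣
      h.eval₂ (phi4 F : MvPolynomial (Fin 4) F →+* S) (phi2 F (X 4))) :
    Polynomial.C (X 0) ∣ h := by
  rw [degree_lastVarEquiv_relation] at hdeg
  have hred : reduceTarget F
      (h.eval₂ (phi4 F : MvPolynomial (Fin 4) F →+* S) (phi2 F (X 4))) = 0 := by
    obtain ⟨p, hp⟩ := hdvd
    rw [hp, RingHom.coe_coe, phi4_X_zero]
    simp [reduceTarget]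
  rw [reduceTarget_eval₂_phi4] at hred
  have hmap := eq_zero_of_eval₂_expand_eq_zero (Polynomial.C_ne_zero.mpr Polynomial.X_ne_zero)
    (Polynomial.degree_map_le.trans_lt hdeg) hred
  rw [Polynomial.C_dvd_iff_dvd_coeff]
  intro i
  have hcoeff := congrArg (fun P => Polynomial.coeff P i) hmap
  rw [Polynomial.coeff_map, Polynomial.coeff_zero] at hcoeff
  exact X_zero_dvd_of_reduceSource_eq_zero
    ((map_eq_zero_iff _ (substDualNorm_injective F)).mp hcoeff)

theorem ker_phi2 :
    RingHom.ker (phi2 F : MvPolynomial (Fin 5) F →+* S) = Ideal.span {relation F} := by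
  have hker := ker_eval₂RingHom_eq_span (f := (phi4 F : MvPolynomial (Fin 4) F →+* S))
    (u := phi2 F (X 4)) (r := lastVarEquiv F 4 (relation F)) (a := X 0)
    (monic_lastVarEquiv_relation F)
    (by rw [eval₂_phi4_lastVarEquiv, phi2_relation]) (MvPolynomial.X_prime).not_isUnit
    (by simp [phi4_X_zero]) (C_X_zero_dvd_of_phi4_X_zero_dvd_eval₂ F)
  ext p
  have hp := SetLike.ext_iff.mp hker (lastVarEquiv F 4 p)
  rwa [RingHom.mem_ker, Polynomial.coe_eval₂RingHom, eval₂_phi4_lastVarEquiv,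
    Ideal.mem_span_singleton, map_dvd_iff, ← Ideal.mem_span_singleton] at hp

theorem mem_range_phi2_iff {p : S} : p ∈ (phi2 F).range ↔ p ∈ (Polynomial.eval₂RingHom
    (phi4 F : MvPolynomial (Fin 4) F →+* S) (phi2 F (X 4))).range := by
  constructor
  · rintro ⟨g, rfl⟩
    exact ⟨lastVarEquiv F 4 g, eval₂_phi4_lastVarEquiv F g⟩
  · rintro ⟨h, rfl⟩
    refine ⟨(lastVarEquiv F 4).symm h, (eval₂_phi4_lastVarEquiv F _).symm.trans ?_⟩
    rw [AlgEquiv.apply_symm_apply, Polynomial.coe_eval₂RingHom]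

theorem mem_range_phi2_of_X_mul_mem {p : S} (hp : X (Sum.inl 0) * p ∈ (phi2 F).range) :
    p ∈ (phi2 F).range := by
  rw [mem_range_phi2_iff] at hp ⊢
  rw [← phi4_X_zero] at hp
  exact mem_range_of_mul_mem_range (monic_lastVarEquiv_relation F)
    (by rw [eval₂_phi4_lastVarEquiv, phi2_relation])
    (by simp [phi4_X_zero]) (C_X_zero_dvd_of_phi4_X_zero_dvd_eval₂ F) hp

theorem exists_pow_mul_mem_adjoin (p : S) :
    ∃ k : ℕ, X (Sum.inl 0) ^ k * p ∈ Algebra.adjoin (phi2 F).range {X (Sum.inl 1)} := by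
  set B := (phi2 F).range
  set B' := (Algebra.adjoin B {(X (Sum.inl 1) : S)}).restrictScalars F
  have hB {b : S} (hb : b ∈ B) : b ∈ B' := (Algebra.adjoin B _).algebraMap_mem ⟨b, hb⟩
  have hx₁ : X (Sum.inl 0) ∈ B' := hB ⟨X 0, phi2_X_zero F⟩
  have hx₂ : X (Sum.inl 1) ∈ B' := Algebra.self_mem_adjoin_singleton B _
  have hy₂ : X (Sum.inr 1) ∈ B' := hB ⟨X 2, phi2_X_two F⟩
  have hy₁ : X (Sum.inl 0) * X (Sum.inr 0) ∈ B' := by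
    have hu₀ := hB ⟨X 4, phi2_X_four F⟩
    simpa using sub_mem hu₀ (mul_mem hx₂ hy₂)
  have htop := saturation_eq_top_of_X_mem (B := B') (M := Submonoid.powers (X (Sum.inl 0)))
    (Submonoid.powers_le.mpr hx₁) fun i => by
      rcases i with i | i <;> fin_cases i
      · exact ⟨1, one_mem _, by simpa using hx₁⟩
      · exact ⟨1, one_mem _, by simpa using hx₂⟩
      · exact ⟨_, Submonoid.mem_powers _, hy₁⟩
      · exact ⟨1, one_mem _, by simpa using hy₂⟩
  obtain ⟨_, ⟨k, rfl⟩, hk⟩ := htop ▸ Algebra.mem_top (x := p)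
  exact ⟨k, hk⟩

theorem gact2_upperRightHom_phi2 (c : F) (g : MvPolynomial (Fin 5) F) :
    gact2 F (GeneralLinearGroup.upperRightHom c) (phi2 F g) = phi2 F g := by
  have hcomp : (gact2 F (GeneralLinearGroup.upperRightHom c)).comp (phi2 F) = phi2 F := by
    refine MvPolynomial.algHom_ext fun i => ?_
    rw [AlgHom.comp_apply]
    fin_cases i
    · simp only [Fin.reduceFinMk, phi2_X_zero, gact2_upperRightHom_x₁]
    · simp only [Fin.reduceFinMk, phi2_X_one, map_orbitNorm, gact2_upperRightHom_x₁,
        gact2_upperRightHom_x₂, orbitNorm_add_smul_self]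
    · simp only [Fin.reduceFinMk, phi2_X_two, gact2_upperRightHom_y₂]
    · simp only [Fin.reduceFinMk, phi2_X_three, map_orbitNorm, gact2_upperRightHom_y₁,
        gact2_upperRightHom_y₂, orbitNorm_add_smul_self]
    · simp only [Fin.reduceFinMk, phi2_X_four, map_add, map_mul, gact2_upperRightHom_x₁,
        gact2_upperRightHom_x₂, gact2_upperRightHom_y₁, gact2_upperRightHom_y₂, smul_eq_C_mul,
        C_neg]
      ring
  exact DFunLike.congr_fun hcomp g

theorem mem_range_phi2_of_forall_gact2_eq {p : S}
    (hp : ∀ c : F, gact2 F (GeneralLinearGroup.upperRightHom c) p = p) : p ∈ (phi2 F).range := by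
  obtain ⟨k, hk⟩ := exists_pow_mul_mem_adjoin F p
  refine mem_of_pow_mul_mem (fun _ => mem_range_phi2_of_X_mul_mem F) k ?_
  let σ (c : F) : S →ₐ[(phi2 F).range] S :=
    { gact2 F (GeneralLinearGroup.upperRightHom c) with
      commutes' := by
        rintro ⟨_, g, rfl⟩
        exact gact2_upperRightHom_phi2 F c g }
  have hmem := mem_range_of_fixed_of_mem_adjoin (t := (⟨_, X 0, phi2_X_zero F⟩ : (phi2 F).range))
    (n := ⟨_, X 1, phi2_X_one F⟩) (X_ne_zero _) rfl σ gact2_upperRightHom_x₂ (fun c => ?_) hk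
  · obtain ⟨b, hb⟩ := hmem
    exact hb ▸ b.2
  · change gact2 F _ _ = _
    rw [map_mul, map_pow, gact2_upperRightHom_x₁, hp]

end Presentation

/-- The case `n = 2` of the main theorem for `U_2`: (a) the invariant ring
`F_q[x_1,x_2,y_1,y_2]^{U_2}` is the image of `φ` (i.e. it is generated by
`f_1, f_2, f_1^*, f_2^*, u_0`), and (b) the kernel of `φ` is generated by the single
relation `Z^q - (X_1 Y_1)^{q-1} Z - X_1^q Y_2 - Y_1^q X_2`. -/
theorem invariantRing_U2 :
    (∀ p : MvPolynomial (Fin 2 ⊕ Fin 2) F,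
      (∀ σ : GL (Fin 2) F,
        ((∀ i : Fin 2, (σ : Matrix (Fin 2) (Fin 2) F) i i = 1) ∧
          ∀ i j : Fin 2, j < i → (σ : Matrix (Fin 2) (Fin 2) F) i j = 0) →
        gact2 F σ p = p) ↔ p ∈ (phi2 F).range) ∧
    RingHom.ker ((phi2 F) : MvPolynomial (Fin 5) F →+* MvPolynomial (Fin 2 ⊕ Fin 2) F) =
      Ideal.span {(X 4 : MvPolynomial (Fin 5) F) ^ (Fintype.card F)
        - (X 0 * X 2) ^ (Fintype.card F - 1) * X 4
        - X 0 ^ (Fintype.card F) * X 3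
        - X 2 ^ (Fintype.card F) * X 1} := by
  refine ⟨fun p => forall_unipotent_iff.trans ⟨mem_range_phi2_of_forall_gact2_eq F, ?_⟩,
    ker_phi2 F⟩
  rintro ⟨g, rfl⟩ c
  exact gact2_upperRightHom_phi2 F c g
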